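/- arXiv:2002.02990 — 4 statements merged into one kernel-verified Lean document; each statement's English description precedes it below -/
import Mathlib

section
/- Let r ≥ 1 be an integer, let C_i denote the i-th Catalan number, and let F_r(X) = X^r - Σ_{i=1}^{r} C_{i-1}·X^{r-i} over ℂ, with roots ξ : Fin r → ℂ listed with multiplicity, i.e., F_r(X) = Π_{j=1}^{r} (X - ξ_j). Let t : ℤ → ℤ satisfy t(m) = 0 for m < 0, t(0) = 1, and t(m) = Σ_{i=1}^{r} C_{i-1}·t(m-i) for all m ≥ 1, and define t̃ : ℤ → ℤ by t̃(m) = Σ_{i=1}^{r} i·C_{i-1}·t(m-i). Then for every integer n ≥ 1, t̃(n) (viewed in ℂ) equals the power sum Σ_{j=1}^{r} ξ_j^{n}. -/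
/-!
Let `Q = 1 - ∑ aᵢ Xⁱ` be the reflection of `X ^ r - ∑ aᵢ X ^ (r - i)`, so that `Q = ∏ (1 - ξⱼ X)`.
The recurrence says that the generating series of the sequence `u` is `1 / Q`, and
`∑ i aᵢ Xⁱ = -X Q'`. Hence `∑ i aᵢ u (n - i)` is the `n`-th coefficient of `-X Q' / Q`, which is
`∑ ξⱼ X / (1 - ξⱼ X)` by logarithmic differentiation of the product.
-/

section Reflect

open Polynomial

lemma reflect_sum {R ι : Type*} [Semiring R] (N : ℕ) (s : Finset ι) (f : ι → R[X]) :
    reflect N (∑ i ∈ s, f i) = ∑ i ∈ s, reflect N (f i) := by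
  ext
  simp only [finsetSum_coeff, coeff_reflect]

lemma reflect_prod {R ι : Type*} [CommSemiring R] (s : Finset ι) (N : ι → ℕ) (f : ι → R[X])
    (hf : ∀ i ∈ s, (f i).natDegree ≤ N i) :
    reflect (∑ i ∈ s, N i) (∏ i ∈ s, f i) = ∏ i ∈ s, reflect (N i) (f i) := by
  classical
  induction s using Finset.induction_on with
  | empty => simp
  | insert b s hb ih =>
    obtain ⟨hfb, hfs⟩ := Finset.forall_mem_insert _ _ _ |>.mp hf
    have hdeg : (∏ i ∈ s, f i).natDegree ≤ ∑ i ∈ s, N i :=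
      (natDegree_prod_le s f).trans (Finset.sum_le_sum hfs)
    rw [Finset.sum_insert hb, Finset.prod_insert hb, Finset.prod_insert hb,
      reflect_mul _ _ hfb hdeg, ih hfs]

lemma reflect_card_prod_X_sub_C {R ι : Type*} [CommRing R] (s : Finset ι) (ξ : ι → R) :
    reflect s.card (∏ j ∈ s, (X - C (ξ j))) = ∏ j ∈ s, (1 - C (ξ j) * X) := by
  rw [Finset.card_eq_sum_ones, reflect_prod s _ _ fun j _ => natDegree_X_sub_C_le (ξ j)]
  simp only [reflect_sub, reflect_one_X, reflect_C, pow_one]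

lemma reflect_X_pow_sub_sum_C_mul_X_pow {R : Type*} [Ring R] (r : ℕ) (a : ℕ → R) :
    reflect r (X ^ r - ∑ i ∈ Finset.Icc 1 r, C (a i) * X ^ (r - i)) =
      1 - ∑ i ∈ Finset.Icc 1 r, C (a i) * X ^ i := by
  rw [reflect_sub, reflect_sum, reflect_monomial, revAt_le le_rfl, Nat.sub_self, pow_zero]
  congr 1
  refine Finset.sum_congr rfl fun i hi => ?_
  rw [reflect_C_mul_X_pow, revAt_le (Nat.sub_le r i), Nat.sub_sub_self (Finset.mem_Icc.mp hi).2]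

end Reflect

section GeneratingSeries

open PowerSeries

lemma X_mul_derivative_sum_C_mul_X_pow {R : Type*} [CommSemiring R] (s : Finset ℕ) (a : ℕ → R) :
    X * d⁄dX R (∑ i ∈ s, C (a i) * X ^ i) = ∑ i ∈ s, C (i * a i) * X ^ i := by
  simp only [map_sum, Finset.mul_sum]
  refine Finset.sum_congr rfl fun i _ => ?_
  rcases i with _ | i
  · simp
  · simp only [Derivation.leibniz, derivative_pow, derivative_C, derivative_X, smul_eq_mul,
      map_mul, map_natCast, Nat.add_sub_cancel]
    ring

lemma one_sub_C_mul_X_mul_mk_pow_succ {R : Type*} [CommRing R] (x : R) :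
    (1 - C x * X) * (PowerSeries.mk fun n => x ^ (n + 1)) = C x := by
  ext (_ | n)
  · simp [sub_mul, mul_assoc]
  · simp [sub_mul, mul_assoc, coeff_succ_X_mul, pow_succ' x (n + 1)]

lemma derivative_prod_one_sub_C_mul_X {R ι : Type*} [CommRing R] (s : Finset ι) (ξ : ι → R) :
    d⁄dX R (∏ j ∈ s, (1 - C (ξ j) * X)) =
      -((∏ j ∈ s, (1 - C (ξ j) * X)) * PowerSeries.mk fun n => ∑ j ∈ s, ξ j ^ (n + 1)) := by
  classical
  induction s using Finset.induction_on with
  | empty =>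
    ext
    simp
  | insert b s hb ih =>
    have hfactor : d⁄dX R (1 - C (ξ b) * X) = -C (ξ b) := by
      simp [Derivation.leibniz]
    have hmk : (PowerSeries.mk fun n => ∑ j ∈ insert b s, ξ j ^ (n + 1)) =
        (PowerSeries.mk fun n => ξ b ^ (n + 1)) +
          PowerSeries.mk fun n => ∑ j ∈ s, ξ j ^ (n + 1) := by
      ext n
      simp [Finset.sum_insert hb]
    rw [Finset.prod_insert hb, hmk, Derivation.leibniz, ih, hfactor, smul_eq_mul, smul_eq_mul]
    linear_combination (∏ j ∈ s, (1 - C (ξ j) * X)) * one_sub_C_mul_X_mul_mk_pow_succ (ξ b)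

lemma coeff_sum_C_mul_X_pow_mul_mk {R : Type*} [CommSemiring R] (s : Finset ℕ) (a : ℕ → R)
    (u : ℤ → R) (hu_neg : ∀ m < 0, u m = 0) (n : ℕ) :
    coeff n ((∑ i ∈ s, C (a i) * X ^ i) * PowerSeries.mk fun k => u k) =
      ∑ i ∈ s, a i * u (n - i) := by
  rw [Finset.sum_mul, map_sum]
  refine Finset.sum_congr rfl fun i _ => ?_
  rw [mul_assoc, coeff_C_mul, coeff_X_pow_mul']
  split_ifs with hin
  · rw [coeff_mk, Nat.cast_sub hin]
  · rw [hu_neg _ (by omega)]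

variable {R : Type*} [CommRing R] {s : Finset ℕ} {a : ℕ → R} {u : ℤ → R}

lemma one_sub_sum_C_mul_X_pow_mul_mk_eq_one (hs : ∀ i ∈ s, 1 ≤ i)
    (hu_neg : ∀ m < 0, u m = 0) (hu_zero : u 0 = 1)
    (hu_rec : ∀ m, 1 ≤ m → u m = ∑ i ∈ s, a i * u (m - i)) :
    (1 - ∑ i ∈ s, C (a i) * X ^ i) * (PowerSeries.mk fun k : ℕ => u k) = 1 := by
  ext n
  rw [sub_mul, one_mul, map_sub, coeff_sum_C_mul_X_pow_mul_mk s a u hu_neg, coeff_mk, coeff_one]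
  rcases Nat.eq_zero_or_pos n with rfl | hn
  · have hsum : ∑ i ∈ s, a i * u ((0 : ℕ) - i) = 0 := Finset.sum_eq_zero fun i hi => by
      rw [hu_neg _ (by have := hs i hi; omega), mul_zero]
    rw [hsum, Nat.cast_zero, hu_zero, sub_zero, if_pos rfl]
  · rw [if_neg hn.ne', hu_rec n (by omega), sub_self]

theorem sum_mul_recurrence_eq_sum_pow {ι : Type*} {J : Finset ι} {ξ : ι → R}
    (hs : ∀ i ∈ s, 1 ≤ i)
    (hξ : (1 - ∑ i ∈ s, C (a i) * X ^ i : R⟦X⟧) = ∏ j ∈ J, (1 - C (ξ j) * X))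
    (hu_neg : ∀ m < 0, u m = 0) (hu_zero : u 0 = 1)
    (hu_rec : ∀ m, 1 ≤ m → u m = ∑ i ∈ s, a i * u (m - i)) {n : ℕ} (hn : 1 ≤ n) :
    ∑ i ∈ s, i * a i * u (n - i) = ∑ j ∈ J, ξ j ^ n := by
  set A : R⟦X⟧ := ∑ i ∈ s, C (a i) * X ^ i with hA
  set T : R⟦X⟧ := PowerSeries.mk fun k : ℕ => u k
  set P : R⟦X⟧ := PowerSeries.mk fun k => ∑ j ∈ J, ξ j ^ (k + 1)
  have hT : (1 - A) * T = 1 := one_sub_sum_C_mul_X_pow_mul_mk_eq_one hs hu_neg hu_zero hu_rec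
  have hderiv : d⁄dX R A = (1 - A) * P := by
    have hprod := derivative_prod_one_sub_C_mul_X J ξ
    rwa [← hξ, map_sub, derivative_one, zero_sub, neg_inj] at hprod
  obtain ⟨k, rfl⟩ := Nat.exists_eq_add_of_le' hn
  calc ∑ i ∈ s, i * a i * u ((k + 1 : ℕ) - i)
      = coeff (k + 1) (X * d⁄dX R A * T) := by
        rw [hA, X_mul_derivative_sum_C_mul_X_pow, coeff_sum_C_mul_X_pow_mul_mk _ _ _ hu_neg]
    _ = coeff (k + 1) (X * P) := by
        rw [hderiv]
        congr 1
        linear_combination X * P * hT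
    _ = ∑ j ∈ J, ξ j ^ (k + 1) := by
        rw [coeff_succ_X_mul, coeff_mk]

end GeneratingSeries

open Polynomial in
theorem tilde_t_eq_power_sum_general {R : Type*} [CommRing R] {r : ℕ} {a : ℕ → R} {ξ : Fin r → R}
    (hξ : (X ^ r - ∑ i ∈ Finset.Icc 1 r, C (a i) * X ^ (r - i) : R[X]) = ∏ j, (X - C (ξ j)))
    {u : ℤ → R} (hu_neg : ∀ m < 0, u m = 0) (hu_zero : u 0 = 1)
    (hu_rec : ∀ m, 1 ≤ m → u m = ∑ i ∈ Finset.Icc 1 r, a i * u (m - i)) {n : ℕ} (hn : 1 ≤ n) :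
    ∑ i ∈ Finset.Icc 1 r, i * a i * u (n - i) = ∑ j, ξ j ^ n := by
  have hreflect : (1 - ∑ i ∈ Finset.Icc 1 r, C (a i) * X ^ i : R[X]) = ∏ j, (1 - C (ξ j) * X) := by
    rw [← reflect_X_pow_sub_sum_C_mul_X_pow, hξ, ← reflect_card_prod_X_sub_C, Finset.card_fin]
  refine sum_mul_recurrence_eq_sum_pow (fun i hi => (Finset.mem_Icc.mp hi).1) ?_
    hu_neg hu_zero hu_rec hn
  simpa only [map_sub, map_one, map_sum, map_prod, map_mul, map_pow, coeToPowerSeries.ringHom_apply,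
    coe_C, coe_X] using congrArg (coeToPowerSeries.ringHom (R := R)) hreflect

/-- Proposition 3.9(2): `t̃ r n` equals the `n`-th power sum of the roots of the
polynomial `F_r(X) = X^r - ∑_{i=1}^r C_{i-1} X^{r-i}`. -/
theorem tilde_t_eq_power_sum (r : ℕ) (hr : 1 ≤ r)
    (ξ : Fin r → ℂ)
    (hξ : ∀ X : ℂ,
      X ^ r - ∑ i ∈ Finset.Icc 1 r, (catalan (i - 1) : ℂ) * X ^ (r - i) =
        ∏ j : Fin r, (X - ξ j))
    (t : ℤ → ℤ)
    (ht_neg : ∀ m : ℤ, m < 0 → t m = 0)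
    (ht_zero : t 0 = 1)
    (ht_rec : ∀ m : ℤ, 1 ≤ m →
      t m = ∑ i ∈ Finset.Icc 1 r, (catalan (i - 1) : ℤ) * t (m - (i : ℤ)))
    (ttilde : ℤ → ℤ)
    (httilde : ∀ m : ℤ,
      ttilde m = ∑ i ∈ Finset.Icc 1 r, (i : ℤ) * (catalan (i - 1) : ℤ) * t (m - (i : ℤ))) :
    ∀ n : ℕ, 1 ≤ n → (ttilde (n : ℤ) : ℂ) = ∑ j : Fin r, ξ j ^ n := by
  intro n hn
  have hpoly : (.X ^ r - ∑ i ∈ Finset.Icc 1 r, .C (catalan (i - 1) : ℂ) * .X ^ (r - i) :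
      Polynomial ℂ) = ∏ j, (.X - .C (ξ j)) :=
    Polynomial.funext fun x => by
      simpa [Polynomial.eval_finsetSum, Polynomial.eval_prod] using hξ x
  rw [httilde]
  exact_mod_cast tilde_t_eq_power_sum_general (u := fun m => (t m : ℂ)) hpoly
    (fun m hm => by simp [ht_neg m hm]) (by simp [ht_zero])
    (fun m hm => by simp [ht_rec m hm]) hn
end

section
/- Let r ≥ 1 be an integer and let C_i denote the i-th Catalan number. Let t : ℤ → ℤ satisfy t(m) = 0 for m < 0, t(0) = 1, and t(m) = Σ_{i=1}^{r} C_{i-1}·t(m-i) for all m ≥ 1. Let s : ℤ → ℤ satisfy s(m) = 0 for m < 0 and s(n) = Σ_{i=1}^{n} t(i-1)·s(n-i) + t(n) for all n ≥ 0. Then for every integer n ≥ 1 one has s(n) = 2·s(n-1) + Σ_{i=2}^{r} C_{i-1}·s(n-i). (This is Asai's recurrence for the number of support τ-tilting modules over the linear Nakayama algebra K A_n / rad^r.) -/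
/-!
Let `T` and `S` be the generating series of `t` and `s`, and put `P = ∑ i ∈ [1, r], c i * X ^ i`,
where `c i` is the Catalan number `C_{i-1}`. The recurrence for `t` says `T = 1 + P * T`, and the
convolution identity says `S = X * (T * S) + T`. Expanding both occurrences of `T` in the latter
gives `S = 1 + X * S + P * (X * (T * S) + T)`, and the last bracket is `S` again. The `n`-th
coefficient of `S = 1 + X * S + P * S` is the recurrence for `s`: the summand `X * S` supplies the
second copy of `s (n - 1)`, next to the one with coefficient `c 1 = 1`.
-/

theorem eq_one_add_mul_add_mul_of_eq_mul_mul_add {R : Type*} [Semiring R] {P S T X : R}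
    (hPX : Commute P X) (hT : T = 1 + P * T) (hS : S = X * (T * S) + T) :
    S = 1 + X * S + P * S :=
  calc
    S = X * ((1 + P * T) * S) + (1 + P * T) := by rw [← hT, ← hS]
    _ = 1 + X * S + (X * P * (T * S) + P * T) := by
      simp only [add_mul, mul_add, one_mul, mul_assoc]
      abel
    _ = 1 + X * S + P * (X * (T * S) + T) := by rw [← hPX.eq, mul_assoc, ← mul_add]
    _ = 1 + X * S + P * S := by rw [← hS]

section GeneratingSeries

open PowerSeries

variable {R : Type*} [Semiring R] {f : ℤ → R}

/-- The generating series `∑ k ≥ 0, f k * X ^ k` of a sequence indexed by `ℤ`. Values at negative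
indices are discarded, so it determines `f` only when `f` vanishes there. -/
def genSeries (f : ℤ → R) : R⟦X⟧ :=
  mk fun k : ℕ => f k

/-- The series `c 1 * X + ⋯ + c r * X ^ r`. Multiplying a generating series by it implements the
right-hand side of the linear recurrence `f m = ∑ i ∈ [1, r], c i * f (m - i)`. -/
noncomputable def recurrenceSeries (c : ℕ → R) (r : ℕ) : R⟦X⟧ :=
  ∑ i ∈ Finset.Icc 1 r, C (c i) * X ^ i

@[simp]
theorem coeff_genSeries (f : ℤ → R) (n : ℕ) : coeff n (genSeries f) = f n :=
  coeff_mk n _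

theorem coeff_X_pow_mul_genSeries (hf : ∀ m < 0, f m = 0) (i n : ℕ) :
    coeff n (X ^ i * genSeries f) = f ((n : ℤ) - i) := by
  rw [coeff_X_pow_mul']
  split_ifs with hin
  · rw [coeff_genSeries, Nat.cast_sub hin]
  · exact (hf _ (by lia)).symm

theorem coeff_recurrenceSeries_mul_genSeries (hf : ∀ m < 0, f m = 0) (c : ℕ → R) (r n : ℕ) :
    coeff n (recurrenceSeries c r * genSeries f) =
      ∑ i ∈ Finset.Icc 1 r, c i * f ((n : ℤ) - i) := by
  simp only [recurrenceSeries, Finset.sum_mul, map_sum, mul_assoc, coeff_C_mul,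
    coeff_X_pow_mul_genSeries hf]

theorem coeff_X_mul_genSeries_mul_genSeries (f g : ℤ → R) (n : ℕ) :
    coeff n (X * (genSeries f * genSeries g)) =
      ∑ i ∈ Finset.Icc 1 n, f ((i : ℤ) - 1) * g ((n : ℤ) - i) := by
  cases n with
  | zero => simp
  | succ n =>
    rw [coeff_succ_X_mul, coeff_mul, Finset.Nat.sum_antidiagonal_eq_sum_range_succ_mk,
      Finset.range_eq_Ico, ← Finset.Ico_add_one_right_eq_Icc,
      ← Finset.sum_Ico_add' _ 0 (n + 1) 1]
    refine Finset.sum_congr rfl fun i hi => ?_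
    have hin : i ≤ n := Nat.lt_succ_iff.mp (Finset.mem_Ico.mp hi).2
    simp [Nat.cast_sub hin]

theorem genSeries_eq_one_add_recurrenceSeries_mul {c : ℕ → R} {r : ℕ}
    (hf_neg : ∀ m < 0, f m = 0) (hf_zero : f 0 = 1)
    (hf_rec : ∀ m : ℤ, 1 ≤ m → f m = ∑ i ∈ Finset.Icc 1 r, c i * f (m - i)) :
    genSeries f = 1 + recurrenceSeries c r * genSeries f := by
  ext n
  rw [map_add, coeff_recurrenceSeries_mul_genSeries hf_neg, coeff_genSeries, coeff_one]
  split_ifs with hn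
  · have hsum : ∑ i ∈ Finset.Icc 1 r, c i * f ((n : ℤ) - i) = 0 :=
      Finset.sum_eq_zero fun i hi => by
        have hi_pos : 1 ≤ i := (Finset.mem_Icc.mp hi).1
        rw [hf_neg _ (by lia), mul_zero]
    rw [hsum, add_zero, hn, Nat.cast_zero, hf_zero]
  · rw [zero_add, hf_rec _ (by lia)]

theorem s_recurrence_general {c : ℕ → R} {r : ℕ} {t s : ℤ → R}
    (ht_neg : ∀ m < 0, t m = 0) (ht_zero : t 0 = 1)
    (ht_rec : ∀ m : ℤ, 1 ≤ m → t m = ∑ i ∈ Finset.Icc 1 r, c i * t (m - i))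
    (hs_neg : ∀ m < 0, s m = 0)
    (hs_conv : ∀ n : ℕ, s n = ∑ i ∈ Finset.Icc 1 n, t ((i : ℤ) - 1) * s ((n : ℤ) - i) + t n)
    {n : ℤ} (hn : 1 ≤ n) :
    s n = s (n - 1) + ∑ i ∈ Finset.Icc 1 r, c i * s (n - i) := by
  lift n to ℕ using by lia
  have hT := genSeries_eq_one_add_recurrenceSeries_mul ht_neg ht_zero ht_rec
  have hS : genSeries s = X * (genSeries t * genSeries s) + genSeries t := by
    ext k
    rw [map_add, coeff_X_mul_genSeries_mul_genSeries, coeff_genSeries, coeff_genSeries, hs_conv]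
  have hS_rec : genSeries s = 1 + X * genSeries s + recurrenceSeries c r * genSeries s :=
    eq_one_add_mul_add_mul_of_eq_mul_mul_add (commute_X _) hT hS
  have hX : coeff n (X * genSeries s) = s ((n : ℤ) - 1) := by
    simpa only [pow_one, Nat.cast_one] using coeff_X_pow_mul_genSeries hs_neg 1 n
  have h_coeff := congrArg (coeff n) hS_rec
  rwa [map_add, map_add, coeff_genSeries, coeff_one, if_neg (by lia), zero_add, hX,
    coeff_recurrenceSeries_mul_genSeries hs_neg] at h_coeff

end GeneratingSeries

/-- Proposition 4.1 (Asai's Theorem 4.1(1)): the number of support τ-tilting modules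
over `K A_n / rad^r` satisfies `s(n) = 2 s(n-1) + ∑_{i=2}^r C_{i-1} s(n-i)`. -/
theorem s_recurrence (r : ℕ) (hr : 1 ≤ r)
    (t : ℤ → ℤ)
    (ht_neg : ∀ m : ℤ, m < 0 → t m = 0)
    (ht_zero : t 0 = 1)
    (ht_rec : ∀ m : ℤ, 1 ≤ m →
      t m = ∑ i ∈ Finset.Icc 1 r, (catalan (i - 1) : ℤ) * t (m - (i : ℤ)))
    (s : ℤ → ℤ)
    (hs_neg : ∀ m : ℤ, m < 0 → s m = 0)
    (hs_conv : ∀ n : ℕ,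
      s (n : ℤ) = ∑ i ∈ Finset.Icc 1 n, t ((i : ℤ) - 1) * s ((n : ℤ) - (i : ℤ)) + t (n : ℤ)) :
    ∀ n : ℤ, 1 ≤ n →
      s n = 2 * s (n - 1) + ∑ i ∈ Finset.Icc 2 r, (catalan (i - 1) : ℤ) * s (n - (i : ℤ)) := by
  intro n hn
  rw [s_recurrence_general ht_neg ht_zero ht_rec hs_neg hs_conv hn,
    ← Finset.add_sum_Ioc_eq_sum_Icc hr, ← Finset.Icc_add_one_left_eq_Ioc]
  simp [two_mul, add_assoc]
end

section
/- Let r ≥ 1 be an integer and let C_i denote the i-th Catalan number. Let t : ℤ → ℤ satisfy t(m) = 0 for m < 0, t(0) = 1, and t(m) = Σ_{i=1}^{r} C_{i-1}·t(m-i) for all m ≥ 1. Let s : ℤ → ℤ satisfy s(m) = 0 for m < 0 and s(n) = Σ_{i=1}^{n} t(i-1)·s(n-i) + t(n) for all n ≥ 0. Define t̃ : ℤ → ℤ by t̃(m) = Σ_{i=1}^{r} i·C_{i-1}·t(m-i), and let s̃ : ℤ → ℤ satisfy s̃(m) = 0 for m ≤ 0 and s̃(n) = Σ_{ℓ=1}^{n-1}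 ℓ·t(ℓ-1)·s(n-ℓ-1) + n·t(n-1) + t̃(n) for all n ≥ 1. Then for every integer n ≥ r+1 one has s̃(n) = 2·s̃(n-1) + Σ_{i=2}^{r} C_{i-1}·s̃(n-i). (This is Asai's recurrence for the number of support τ-tilting modules over the cyclic Nakayama algebra K Ã_n / rad^r.) -/
/-!
Let `P = ∑ c_i X^i` and let `T`, `S`, `U` be the generating functions of `t`, `s`, `s̃`. The
recurrences for `t` and `s` say `T = (1 - P)⁻¹` and `1 + X S = (1 - X T)⁻¹`. With the Euler
derivation `D = X d/dX`, the formula for `s̃` becomes a sum of two logarithmic derivatives,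
`U = D(X T) / (1 - X T) + D(P) / (1 - P)`. Since `(1 - X T) (1 - P) = 1 - P - X`, they combine to
`U = D(P + X) / (1 - P - X)`. Hence `(1 - P - X) U` is a polynomial of degree at most `r`, which is
the recurrence.
-/

section LogarithmicDerivative

variable {R A : Type*} [CommRing R] [CommRing A] [Algebra R A] (D : Derivation R A A)

theorem logDerivation_mul {a a' b b' : A} (ha : a' * a = 1) (hb : b' * b = 1) :
    a' * b' * D (a * b) = a' * D a + b' * D b := by
  rw [D.leibniz, smul_eq_mul, smul_eq_mul]
  linear_combination b' * D b * ha + a' * D a * hb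

theorem logDerivation_add_mul_one_sub {x p t s : A} (ht : t * (1 - p) = 1)
    (hs : s = x * (t * s) + t) :
    (D (x * t) * (x * s + 1) + D p * t) * (1 - p - x) = D (p + x) := by
  have h_inv : (x * s + 1) * (1 - x * t) = 1 := by linear_combination x * hs
  have h_prod : (1 - x * t) * (1 - p) = 1 - p - x := by linear_combination -x * ht
  have h_log := logDerivation_mul D h_inv ht
  have h_unit : (x * s + 1) * t * (1 - p - x) = 1 := by
    rw [← h_prod, mul_mul_mul_comm, h_inv, ht, one_mul]
  rw [h_prod] at h_log
  simp only [map_sub, map_add, D.map_one_eq_zero] at h_log ⊢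
  linear_combination (1 - p - x) * h_log + (D p + D x) * h_unit

end LogarithmicDerivative

section GeneratingFunctions

open PowerSeries

variable {R : Type*} [CommRing R]

/-- The Euler derivation `X d/dX` of `R⟦X⟧`, which multiplies the `n`-th coefficient by `n`. -/
noncomputable def eulerDerivation (R : Type*) [CommRing R] : Derivation R R⟦X⟧ R⟦X⟧ :=
  (X : R⟦X⟧) • derivative R

theorem coeff_eulerDerivation (f : R⟦X⟧) (n : ℕ) :
    coeff n (eulerDerivation R f) = n * coeff n f := by
  rw [eulerDerivation, Derivation.smul_apply, smul_eq_mul]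
  cases n with
  | zero => simp
  | succ n =>
    rw [coeff_succ_X_mul, coeff_derivative]
    push_cast
    ring

/-- The generating function `∑_{n ≥ 0} f(n) X^n` of a sequence indexed by `ℤ`; the values at
negative indices are discarded. -/
def genFun (f : ℤ → R) : R⟦X⟧ :=
  mk fun n : ℕ => f n

@[simp]
theorem coeff_genFun (f : ℤ → R) (n : ℕ) : coeff n (genFun f) = f n :=
  coeff_mk n _

theorem coeff_X_mul_genFun_mul_genFun (f g : ℤ → R) (n : ℕ) :
    coeff n (X * (genFun f * genFun g)) =
      ∑ i ∈ Finset.Icc 1 n, f ((i : ℤ) - 1) * g ((n : ℤ) - i) := by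
  cases n with
  | zero => simp
  | succ n =>
    rw [coeff_succ_X_mul, coeff_mul, Finset.Nat.sum_antidiagonal_eq_sum_range_succ_mk,
      Finset.range_eq_Ico, ← Finset.Ico_add_one_right_eq_Icc,
      ← Finset.sum_Ico_add' _ 0 (n + 1) 1]
    refine Finset.sum_congr rfl fun i hi => ?_
    have hin : i ≤ n := Nat.lt_succ_iff.mp (Finset.mem_Ico.mp hi).2
    simp [Nat.cast_sub hin]

theorem eulerDerivation_X_mul_genFun (f : ℤ → R) :
    eulerDerivation R (X * genFun f) = X * genFun fun m => ((m + 1 : ℤ) : R) * f m := by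
  ext n
  rw [coeff_eulerDerivation]
  cases n <;> simp [coeff_succ_X_mul]

/-- The polynomial `∑_{i=1}^r c_i X^i`, as a power series, whose coefficients are the weights of a
linear recurrence of order `r`. -/
noncomputable def weightSeries (r : ℕ) (c : ℕ → R) : R⟦X⟧ :=
  ∑ i ∈ Finset.Icc 1 r, monomial i (c i)

theorem coeff_weightSeries (r : ℕ) (c : ℕ → R) (n : ℕ) :
    coeff n (weightSeries r c) = if n ∈ Finset.Icc 1 r then c n else 0 := by
  simp only [weightSeries, map_sum, coeff_monomial, Finset.sum_ite_eq]

theorem constantCoeff_weightSeries (r : ℕ) (c : ℕ → R) :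
    constantCoeff (weightSeries r c) = 0 := by
  simp [← coeff_zero_eq_constantCoeff_apply, coeff_weightSeries]

theorem eulerDerivation_weightSeries (r : ℕ) (c : ℕ → R) :
    eulerDerivation R (weightSeries r c) = weightSeries r fun i => i * c i := by
  ext n
  simp only [coeff_eulerDerivation, coeff_weightSeries, mul_ite, mul_zero]

theorem coeff_weightSeries_mul_genFun (r : ℕ) (c : ℕ → R) {f : ℤ → R}
    (hf : ∀ m : ℤ, m < 0 → f m = 0) (n : ℕ) :
    coeff n (weightSeries r c * genFun f) =
      ∑ i ∈ Finset.Icc 1 r, c i * f ((n : ℤ) - i) := by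
  rw [weightSeries, Finset.sum_mul, map_sum]
  refine Finset.sum_congr rfl fun i _ => ?_
  rw [monomial_eq_C_mul_X_pow, mul_assoc, coeff_C_mul, coeff_X_pow_mul']
  split_ifs with hin
  · rw [coeff_genFun, Nat.cast_sub hin]
  · rw [hf _ (by omega)]

theorem coeff_eulerDerivation_weightSeries_add_X {r : ℕ} (hr : 1 ≤ r) (c : ℕ → R) {n : ℕ}
    (hn : r < n) : coeff n (eulerDerivation R (weightSeries r c + X)) = 0 := by
  have h_weight : n ∉ Finset.Icc 1 r := by simp [hn]
  rw [coeff_eulerDerivation, map_add, coeff_weightSeries, if_neg h_weight, coeff_X,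
    if_neg (by omega), add_zero, mul_zero]

end GeneratingFunctions

section Recurrences

open PowerSeries

variable {R : Type*} [CommRing R] {r : ℕ} {c : ℕ → R} {t s ttilde stilde : ℤ → R}

theorem genFun_mul_one_sub_weightSeries (ht_neg : ∀ m : ℤ, m < 0 → t m = 0) (ht_zero : t 0 = 1)
    (ht_rec : ∀ m : ℤ, 1 ≤ m → t m = ∑ i ∈ Finset.Icc 1 r, c i * t (m - (i : ℤ))) :
    genFun t * (1 - weightSeries r c) = 1 := by
  have h_rec : genFun t = weightSeries r c * genFun t + 1 := by
    ext n
    cases n with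
    | zero => simp [constantCoeff_weightSeries, ht_zero]
    | succ n =>
      rw [map_add, coeff_weightSeries_mul_genFun r c ht_neg, coeff_genFun, ht_rec _ (by omega),
        coeff_one, if_neg n.succ_ne_zero, add_zero]
  linear_combination h_rec

theorem genFun_eq_X_mul_mul_add
    (hs_conv : ∀ n : ℕ,
      s (n : ℤ) = ∑ i ∈ Finset.Icc 1 n, t ((i : ℤ) - 1) * s ((n : ℤ) - (i : ℤ)) + t (n : ℤ)) :
    genFun s = X * (genFun t * genFun s) + genFun t := by
  ext n
  rw [map_add, coeff_X_mul_genFun_mul_genFun, coeff_genFun, coeff_genFun, hs_conv]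

theorem genFun_stilde_eq (ht_neg : ∀ m : ℤ, m < 0 → t m = 0)
    (httilde : ∀ m : ℤ, ttilde m = ∑ i ∈ Finset.Icc 1 r, (i : R) * c i * t (m - (i : ℤ)))
    (hstilde_zero : stilde 0 = 0)
    (hstilde : ∀ n : ℕ, 1 ≤ n →
      stilde (n : ℤ) =
        ∑ l ∈ Finset.Icc 1 (n - 1), (l : R) * t ((l : ℤ) - 1) * s ((n : ℤ) - (l : ℤ) - 1) +
          (n : R) * t ((n : ℤ) - 1) + ttilde (n : ℤ)) :
    genFun stilde =
      eulerDerivation R (X * genFun t) * (X * genFun s + 1) +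
        eulerDerivation R (weightSeries r c) * genFun t := by
  rw [eulerDerivation_X_mul_genFun, eulerDerivation_weightSeries, mul_add, mul_one,
    mul_mul_mul_comm, mul_assoc]
  ext n
  cases n with
  | zero => simp [constantCoeff_weightSeries, hstilde_zero]
  | succ n =>
    rw [map_add, map_add, coeff_weightSeries_mul_genFun r _ ht_neg, ← httilde, coeff_succ_X_mul,
      coeff_X_mul_genFun_mul_genFun, coeff_succ_X_mul, coeff_genFun, coeff_genFun,
      hstilde _ n.succ_pos]
    simp [add_sub_right_comm]

theorem tilde_s_recurrence_general (hr : 1 ≤ r)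
    (ht_neg : ∀ m : ℤ, m < 0 → t m = 0)
    (ht_zero : t 0 = 1)
    (ht_rec : ∀ m : ℤ, 1 ≤ m → t m = ∑ i ∈ Finset.Icc 1 r, c i * t (m - (i : ℤ)))
    (hs_conv : ∀ n : ℕ,
      s (n : ℤ) = ∑ i ∈ Finset.Icc 1 n, t ((i : ℤ) - 1) * s ((n : ℤ) - (i : ℤ)) + t (n : ℤ))
    (httilde : ∀ m : ℤ, ttilde m = ∑ i ∈ Finset.Icc 1 r, (i : R) * c i * t (m - (i : ℤ)))
    (hstilde_nonpos : ∀ m : ℤ, m ≤ 0 → stilde m = 0)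
    (hstilde : ∀ n : ℕ, 1 ≤ n →
      stilde (n : ℤ) =
        ∑ l ∈ Finset.Icc 1 (n - 1), (l : R) * t ((l : ℤ) - 1) * s ((n : ℤ) - (l : ℤ) - 1) +
          (n : R) * t ((n : ℤ) - 1) + ttilde (n : ℤ))
    (n : ℤ) (hn : (r : ℤ) + 1 ≤ n) :
    stilde n =
      (1 + c 1) * stilde (n - 1) + ∑ i ∈ Finset.Icc 2 r, c i * stilde (n - (i : ℤ)) := by
  have h_log : genFun stilde * (1 - weightSeries r c - X) =
      eulerDerivation R (weightSeries r c + X) := by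
    rw [genFun_stilde_eq ht_neg httilde (hstilde_nonpos 0 le_rfl) hstilde]
    exact logDerivation_add_mul_one_sub _
      (genFun_mul_one_sub_weightSeries ht_neg ht_zero ht_rec) (genFun_eq_X_mul_mul_add hs_conv)
  have h_rec : genFun stilde = X * genFun stilde + weightSeries r c * genFun stilde +
      eulerDerivation R (weightSeries r c + X) := by
    linear_combination h_log
  obtain ⟨k, rfl⟩ : ∃ k : ℕ, n = (k + 1 : ℕ) := ⟨(n - 1).toNat, by omega⟩
  have h_coeff := congrArg (coeff (k + 1)) h_rec
  rw [map_add, map_add, coeff_eulerDerivation_weightSeries_add_X hr c (by omega), add_zero,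
    coeff_weightSeries_mul_genFun r c fun m hm => hstilde_nonpos m hm.le, coeff_succ_X_mul,
    coeff_genFun, coeff_genFun, ← Finset.add_sum_Ioc_eq_sum_Icc hr,
    ← Finset.Icc_add_one_left_eq_Ioc] at h_coeff
  rw [h_coeff]
  push_cast
  rw [add_sub_cancel_right]
  ring

end Recurrences

/-- Proposition 4.3 (Asai's Theorem 4.1(2)): the number of support τ-tilting modules
over the cyclic Nakayama algebra `K Ã_n / rad^r` satisfies
`s̃(n) = 2 s̃(n-1) + ∑_{i=2}^r C_{i-1} s̃(n-i)`. -/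
theorem tilde_s_recurrence (r : ℕ) (hr : 1 ≤ r)
    (t : ℤ → ℤ)
    (ht_neg : ∀ m : ℤ, m < 0 → t m = 0)
    (ht_zero : t 0 = 1)
    (ht_rec : ∀ m : ℤ, 1 ≤ m →
      t m = ∑ i ∈ Finset.Icc 1 r, (catalan (i - 1) : ℤ) * t (m - (i : ℤ)))
    (s : ℤ → ℤ)
    (hs_neg : ∀ m : ℤ, m < 0 → s m = 0)
    (hs_conv : ∀ n : ℕ,
      s (n : ℤ) = ∑ i ∈ Finset.Icc 1 n, t ((i : ℤ) - 1) * s ((n : ℤ) - (i : ℤ)) + t (n : ℤ))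
    (ttilde : ℤ → ℤ)
    (httilde : ∀ m : ℤ,
      ttilde m = ∑ i ∈ Finset.Icc 1 r, (i : ℤ) * (catalan (i - 1) : ℤ) * t (m - (i : ℤ)))
    (stilde : ℤ → ℤ)
    (hstilde_nonpos : ∀ m : ℤ, m ≤ 0 → stilde m = 0)
    (hstilde : ∀ n : ℕ, 1 ≤ n →
      stilde (n : ℤ) =
        ∑ l ∈ Finset.Icc 1 (n - 1), (l : ℤ) * t ((l : ℤ) - 1) * s ((n : ℤ) - (l : ℤ) - 1) +
          (n : ℤ) * t ((n : ℤ) - 1) + ttilde (n : ℤ)) :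
    ∀ n : ℤ, (r : ℤ) + 1 ≤ n →
      stilde n =
        2 * stilde (n - 1) +
          ∑ i ∈ Finset.Icc 2 r, (catalan (i - 1) : ℤ) * stilde (n - (i : ℤ)) := by
  simpa [one_add_one_eq_two] using
    tilde_s_recurrence_general (c := fun i => (catalan (i - 1) : ℤ)) hr ht_neg ht_zero ht_rec
      hs_conv httilde hstilde_nonpos hstilde
end

section
/- Let r ≥ 1 be an integer, let C_i denote the i-th Catalan number, and let F_r(X) = X^r - Σ_{i=1}^{r} C_{i-1}·X^{r-i} over ℂ, with roots ξ : Fin r → ℂ listed with multiplicity, i.e., F_r(X) = Π_{j=1}^{r} (X - ξ_j). For an integer m, let H_m denote the complete homogeneous sum Σ over all tuples (t_1, …, t_r) of nonnegative integers with t_1 + ⋯ + t_r = m of ξ_1^{t_1}·ξ_2^{t_2}⋯ξ_r^{t_r} (so H_0 = 1 and H_m = 0 for m < 0). Then for every integer n ≥ 1 one has Σ_{j=1}^{r} ξ_j^{n} = Σ_{i=1}^{r} i·C_{i-1}·H_{n-i}. -/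
/-!
In generating-function form, Newton's identities read `∑ (-1)^(k+1) k e_k T^k = E(-T) P(T)`, where
`E(-T) = ∏ (1 - x_i T) = ∑ (-1)^k e_k T^k` and `P(T) = ∑_{n ≥ 1} p_n T^n`. Multiplying by the
inverse `∏ (1 - x_i T)⁻¹ = ∑ h_m T^m` of `E(-T)` gives `p_n = ∑ (-1)^(i+1) i e_i h_{n-i}`, and by
Vieta the coefficients of `∏ (X - ξ_j)` are the values `(-1)^i e_i(ξ)`.
-/

section GeneratingFunctions

open Finset MvPolynomial

variable (σ R : Type*) [Fintype σ] [CommRing R]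

theorem one_sub_C_mul_X_mul_mk_pow {A : Type*} [CommRing A] (a : A) :
    (1 - PowerSeries.C a * PowerSeries.X) * PowerSeries.mk (a ^ ·) = 1 := by
  have h := congrArg (PowerSeries.rescale a) (PowerSeries.mk_one_mul_one_sub_eq_one A)
  simpa only [map_mul, map_sub, map_one, PowerSeries.rescale_X, PowerSeries.rescale_mk, mul_comm,
    Pi.one_apply, mul_one] using h

theorem esymm_eq_zero_of_card_lt {k : ℕ} (hk : Fintype.card σ < k) : esymm σ R k = 0 := by
  rw [esymm, powersetCard_eq_empty.mpr hk, sum_empty]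

theorem prod_one_sub_C_X_mul_X_eq_mk_esymm :
    ∏ i, (1 - PowerSeries.C (X i : MvPolynomial σ R) * PowerSeries.X) =
      PowerSeries.mk fun k => (-1) ^ k * esymm σ R k := by
  have hterm (t : Finset σ) :
      ∏ i ∈ t, -(PowerSeries.C (X i : MvPolynomial σ R) * PowerSeries.X) =
        PowerSeries.C ((-1) ^ #t * ∏ i ∈ t, X i) * PowerSeries.X ^ #t := by
    rw [prod_neg, prod_mul_distrib, prod_const, map_mul, map_prod, map_pow, map_neg, map_one,
      mul_assoc]
  ext1 k
  simp only [sub_eq_add_neg, prod_one_add, hterm, map_sum, PowerSeries.coeff_C_mul_X_pow,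
    PowerSeries.coeff_mk, esymm, mul_sum]
  rw [← sum_filter, powersetCard_eq_filter]
  simp only [eq_comm (a := k)]
  exact sum_congr rfl fun t ht => by rw [(mem_filter.mp ht).2]

theorem mk_mul_esymm_eq_mk_esymm_mul_mk_psum :
    (PowerSeries.mk fun k => (-1) ^ (k + 1) * (k * esymm σ R k)) =
      (PowerSeries.mk fun k => (-1) ^ k * esymm σ R k) *
        PowerSeries.mk fun n => if n = 0 then 0 else psum σ R n := by
  ext1 k
  rw [PowerSeries.coeff_mk, mul_esymm_eq_sum, ← mul_assoc,
    pow_mul_pow_eq_one _ (by simp), one_mul, sum_filter, PowerSeries.coeff_mul]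
  refine sum_congr rfl fun a ha => ?_
  have hlt : a.1 < k ↔ a.2 ≠ 0 := by grind [HasAntidiagonal.mem_antidiagonal]
  simp only [PowerSeries.coeff_mk, hlt, mul_ite, mul_zero, ite_not]

variable [DecidableEq σ]

theorem hsymm_eq_sum_piAntidiag (n : ℕ) :
    hsymm σ R n = ∑ f ∈ univ.piAntidiag n, ∏ i, X i ^ f i := by
  rw [← map_sym_eq_piAntidiag, sum_map, sym_univ]
  refine sum_congr rfl fun s _ => ?_
  rw [prod_multiset_map_count]
  refine prod_subset (subset_univ _) fun i _ hi => ?_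
  rw [Multiset.count_eq_zero.mpr (Multiset.mem_toFinset.not.mp hi), pow_zero]

theorem prod_mk_X_pow_eq_mk_hsymm :
    ∏ i, PowerSeries.mk ((X i : MvPolynomial σ R) ^ ·) = PowerSeries.mk (hsymm σ R) := by
  ext1 n
  rw [PowerSeries.coeff_prod, PowerSeries.coeff_mk, hsymm_eq_sum_piAntidiag]
  refine sum_equiv Finsupp.equivFunOnFinite (fun f => ?_) (fun f _ => ?_)
  · simp [mem_finsuppAntidiag, mem_piAntidiag]
  · simp

theorem mk_esymm_mul_mk_hsymm :
    (PowerSeries.mk fun k => (-1) ^ k * esymm σ R k) * PowerSeries.mk (hsymm σ R) = 1 := by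
  rw [← prod_one_sub_C_X_mul_X_eq_mk_esymm, ← prod_mk_X_pow_eq_mk_hsymm, ← prod_mul_distrib]
  exact prod_eq_one fun i _ => one_sub_C_mul_X_mul_mk_pow _

theorem psum_eq_sum_antidiagonal_esymm_mul_hsymm {n : ℕ} (hn : n ≠ 0) :
    psum σ R n =
      ∑ a ∈ antidiagonal n, (-1) ^ (a.1 + 1) * (a.1 * esymm σ R a.1) * hsymm σ R a.2 := by
  have h : (PowerSeries.mk fun n => if n = 0 then 0 else psum σ R n) =
      (PowerSeries.mk fun k => (-1) ^ (k + 1) * (k * esymm σ R k)) *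
        PowerSeries.mk (hsymm σ R) := by
    rw [mk_mul_esymm_eq_mk_esymm_mul_mk_psum, mul_right_comm, mk_esymm_mul_mk_hsymm, one_mul]
  simpa only [PowerSeries.coeff_mk, PowerSeries.coeff_mul, if_neg hn] using
    congrArg (PowerSeries.coeff n) h

theorem psum_eq_sum_Icc_esymm_mul_hsymm {n : ℕ} (hn : n ≠ 0) :
    psum σ R n = ∑ i ∈ Icc 1 (min (Fintype.card σ) n),
      (-1) ^ (i + 1) * (i * esymm σ R i) * hsymm σ R (n - i) := by
  rw [psum_eq_sum_antidiagonal_esymm_mul_hsymm σ R hn, Nat.sum_antidiagonal_eq_sum_range_succ_mk]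
  refine (sum_subset (fun i hi => ?_) fun i hi hi' => ?_).symm
  · grind
  · obtain rfl | hcard : i = 0 ∨ Fintype.card σ < i := by grind
    · simp
    · simp [esymm_eq_zero_of_card_lt σ R hcard]

end GeneratingFunctions

section Evaluation

open Finset Polynomial

variable {R : Type*} [CommRing R]

theorem coeff_prod_X_sub_C_eq_aeval_esymm {ι : Type*} [Fintype ι] (ξ : ι → R) {i : ℕ}
    (hi : i ≤ Fintype.card ι) :
    (∏ j, (X - C (ξ j))).coeff (Fintype.card ι - i) =
      (-1) ^ i * MvPolynomial.aeval ξ (MvPolynomial.esymm ι R i) := by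
  have hcard : (univ.val.map ξ).card = Fintype.card ι := by simp
  have hvieta := Multiset.prod_X_sub_C_coeff (univ.val.map ξ) (k := Fintype.card ι - i) (by omega)
  rw [Multiset.map_map, hcard, Nat.sub_sub_self hi] at hvieta
  rwa [MvPolynomial.aeval_esymm_eq_multiset_esymm]

theorem aeval_hsymm_eq_sum_antidiagonalTuple {r : ℕ} (ξ : Fin r → R) (m : ℕ) :
    MvPolynomial.aeval ξ (MvPolynomial.hsymm (Fin r) R m) =
      ∑ f ∈ Nat.antidiagonalTuple r m, ∏ j, ξ j ^ f j := by
  simp [hsymm_eq_sum_piAntidiag, piAntidiag_univ_fin_eq_antidiagonalTuple]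

theorem coeff_X_pow_sub_sum_C_mul_X_pow (c : ℕ → R) {r i : ℕ} (hi : i ∈ Icc 1 r) :
    (X ^ r - ∑ k ∈ Icc 1 r, C (c k) * X ^ (r - k)).coeff (r - i) = -c i := by
  have hlead : r - i ≠ r := by grind
  have hexp : ∀ k ∈ Icc 1 r, (r - i = r - k ↔ i = k) := by grind
  rw [coeff_sub, coeff_X_pow, if_neg hlead, zero_sub, finsetSum_coeff]
  simp only [coeff_C_mul_X_pow]
  rw [sum_congr rfl fun k hk => if_congr (hexp k hk) rfl rfl, sum_ite_eq, if_pos hi]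

theorem aeval_esymm_of_prod_X_sub_C_eq {r : ℕ} {ξ : Fin r → R} {c : ℕ → R}
    (hξ : X ^ r - ∑ i ∈ Icc 1 r, C (c i) * X ^ (r - i) = ∏ j, (X - C (ξ j)))
    {i : ℕ} (hi : i ∈ Icc 1 r) :
    MvPolynomial.aeval ξ (MvPolynomial.esymm (Fin r) R i) = (-1) ^ (i + 1) * c i := by
  have hvieta := coeff_prod_X_sub_C_eq_aeval_esymm ξ (i := i) (by simpa using (mem_Icc.mp hi).2)
  rw [Fintype.card_fin, ← hξ, coeff_X_pow_sub_sum_C_mul_X_pow c hi] at hvieta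
  rw [pow_succ, mul_assoc, neg_one_mul, hvieta, ← mul_assoc,
    pow_mul_pow_eq_one _ (by simp), one_mul]

theorem power_sum_eq_weighted_complete_homogeneous_general {r : ℕ} {ξ : Fin r → R} {c : ℕ → R}
    (hξ : X ^ r - ∑ i ∈ Icc 1 r, C (c i) * X ^ (r - i) = ∏ j, (X - C (ξ j)))
    {H : ℤ → R} (hH_neg : ∀ m : ℤ, m < 0 → H m = 0)
    (hH : ∀ m : ℕ, H m = ∑ f ∈ Nat.antidiagonalTuple r m, ∏ j, ξ j ^ f j)
    {n : ℕ} (hn : n ≠ 0) :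
    ∑ j, ξ j ^ n = ∑ i ∈ Icc 1 r, i * c i * H (n - i) := by
  have hterm : ∀ i ∈ Icc 1 (min r n),
      (-1) ^ (i + 1) * (i * MvPolynomial.aeval ξ (MvPolynomial.esymm (Fin r) R i)) *
        MvPolynomial.aeval ξ (MvPolynomial.hsymm (Fin r) R (n - i)) = i * c i * H (n - i) := by
    intro i hi
    obtain ⟨hi1, hir, hin⟩ : 1 ≤ i ∧ i ≤ r ∧ i ≤ n := by simpa using hi
    have hsign : (-1 : R) ^ (i + 1) * (-1) ^ (i + 1) = 1 :=
      pow_mul_pow_eq_one _ (by simp)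
    rw [aeval_esymm_of_prod_X_sub_C_eq hξ (mem_Icc.mpr ⟨hi1, hir⟩),
      aeval_hsymm_eq_sum_antidiagonalTuple, ← hH, Nat.cast_sub hin]
    linear_combination (i * c i * H (n - i)) * hsign
  calc ∑ j, ξ j ^ n = MvPolynomial.aeval ξ (MvPolynomial.psum (Fin r) R n) := by
        simp [MvPolynomial.psum]
    _ = ∑ i ∈ Icc 1 (min r n), i * c i * H (n - i) := by
        rw [psum_eq_sum_Icc_esymm_mul_hsymm (Fin r) R hn, Fintype.card_fin, map_sum]
        exact sum_congr rfl fun i hi => by simpa using hterm i hi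
    _ = ∑ i ∈ Icc 1 r, i * c i * H (n - i) := by
        refine sum_subset (Icc_subset_Icc_right (min_le_left r n)) fun i hi hi' => ?_
        have hneg : (n : ℤ) - i < 0 := by
          simp only [mem_Icc] at hi hi'
          omega
        rw [hH_neg _ hneg, mul_zero]

end Evaluation

/-- The identity from the proof of Proposition 3.9: the `n`-th power sum of the roots
of `F_r(X) = X^r - ∑_{i=1}^r C_{i-1} X^{r-i}` equals `∑_{i=1}^r i C_{i-1} H_{n-i}`,
where `H_m` is the complete homogeneous symmetric sum of degree `m` in the roots. -/
theorem power_sum_eq_weighted_complete_homogeneous (r : ℕ) (hr : 1 ≤ r)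
    (ξ : Fin r → ℂ)
    (hξ : ∀ X : ℂ,
      X ^ r - ∑ i ∈ Finset.Icc 1 r, (catalan (i - 1) : ℂ) * X ^ (r - i) =
        ∏ j : Fin r, (X - ξ j))
    (H : ℤ → ℂ)
    (hH_neg : ∀ m : ℤ, m < 0 → H m = 0)
    (hH : ∀ m : ℕ,
      H (m : ℤ) = ∑ f ∈ Finset.Nat.antidiagonalTuple r m, ∏ j : Fin r, ξ j ^ f j) :
    ∀ n : ℕ, 1 ≤ n →
      ∑ j : Fin r, ξ j ^ n =
        ∑ i ∈ Finset.Icc 1 r, (i : ℂ) * (catalan (i - 1) : ℂ) * H ((n : ℤ) - (i : ℤ)) := by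
  refine fun n hn => power_sum_eq_weighted_complete_homogeneous_general
    (Polynomial.funext fun x => ?_) hH_neg hH (Nat.one_le_iff_ne_zero.mp hn)
  simpa [Polynomial.eval_finsetSum, Polynomial.eval_prod] using hξ x
end
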